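/- Let r : (0,∞) → ℝ be nonincreasing, and suppose the function ψ(x) := x·r(x) is concave on (0,∞). Let N > 0 be a real number, m ≥ 1 an integer, and p₁, …, p_m > 0 with Σ_{i=1}^m p_i = 1. Then Σ_{i=1}^m p_i · r(N p_i) ≤ r(N/m). -/

import Mathlib

/-!
The left-hand side is `(m / N) * ∑ i, (1 / m) * ψ (N * p i)` with `ψ x = x * r x`. Jensen's
inequality for the concave function `ψ` (`ConcaveOn.le_map_sum`) bounds the sum by `ψ (N / m)`,
and `(m / N) * ψ (N / m) = r (N / m)`.
-/

open Set

/-- the Jensen-type aggregation estimate for Rademacher complexity bounds.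
Let `r : (0,∞) → ℝ` be nonincreasing with `x ↦ x·r(x)` concave on `(0,∞)`.  For any real
`N > 0`, integer `m ≥ 1` and positive weights `p₁, …, p_m` summing to `1`,
`Σ_i p_i · r(N p_i) ≤ r(N/m)`. -/
theorem jensen_rademacher_aggregation
    (r : ℝ → ℝ) (hr : AntitoneOn r (Ioi 0))
    (hconc : ConcaveOn ℝ (Ioi 0) fun x => x * r x)
    (N : ℝ) (hN : 0 < N) (m : ℕ) (hm : 1 ≤ m)
    (p : Fin m → ℝ) (hp : ∀ i, 0 < p i) (hsum : ∑ i, p i = 1) :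
    ∑ i, p i * r (N * p i) ≤ r (N / m) := by
  have hm0 : (0 : ℝ) < m := by exact_mod_cast hm
  -- Jensen with uniform weights `1 / m` at the points `N * p i`, whose mean is `N / m`
  have hJ := hconc.le_map_sum (t := Finset.univ) (w := fun _ : Fin m => (1 : ℝ) / m)
    (p := fun i => N * p i) (fun _ _ => by positivity)
    (by simp [hm0.ne']) (fun i _ => mul_pos hN (hp i))
  have hmean : ∑ i, (1 : ℝ) / m * (N * p i) = N / m := by
    rw [← Finset.mul_sum, ← Finset.mul_sum, hsum]
    ring
  have hL : ∑ i, (1 : ℝ) / m * (N * p i * r (N * p i)) =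
      N / m * ∑ i, p i * r (N * p i) := by
    rw [Finset.mul_sum]
    exact Finset.sum_congr rfl fun i _ => by ring
  simp only [smul_eq_mul] at hJ
  rw [hmean, hL] at hJ
  exact le_of_mul_le_mul_left hJ (div_pos hN hm0)
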